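/- arXiv:1201.2952 — 4 statements merged into one kernel-verified Lean document; each statement's English description precedes it below -/
import Mathlib

section
/- Let n ≥ 1, let Ω ⊆ ℝ^n be open, let x0 ∈ Ω, and let T : (ℝ^n → ℂ) → ℂ be ℂ-linear. If a sequence (f_k) of functions, each smooth on Ω, represents T on Ω and is asymptotically equicontinuous at x0, then the sequence of values (f_k(x0))_{k∈ℕ} converges in ℂ. (Sequential form of Robinson's theorem that a predistribution with an S-continuous representative at x0 has a finite value at x0.) -/
open MeasureTheory Filter Metric Topology

noncomputable section

/-- A test function on an open set `U ⊆ ℝⁿ`: a smooth function `ℝⁿ → ℂ` whose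
support is compact and contained in `U`. -/
def IsTestFunction {n : ℕ} (U : Set (EuclideanSpace ℝ (Fin n)))
    (φ : EuclideanSpace ℝ (Fin n) → ℂ) : Prop :=
  ContDiff ℝ (⊤ : ℕ∞) φ ∧ HasCompactSupport φ ∧ tsupport φ ⊆ U

/-- A sequence `f k` of functions represents the linear map `T` on `U` if
`∫_U (f k) φ → T φ` for every test function `φ` on `U`. -/
def Represents {n : ℕ} (U : Set (EuclideanSpace ℝ (Fin n)))
    (T : (EuclideanSpace ℝ (Fin n) → ℂ) → ℂ)
    (f : ℕ → EuclideanSpace ℝ (Fin n) → ℂ) : Prop :=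
  ∀ φ : EuclideanSpace ℝ (Fin n) → ℂ, IsTestFunction U φ →
    Tendsto (fun k => ∫ x in U, f k x * φ x) atTop (𝓝 (T φ))

/-- A sequence `f k` is asymptotically equicontinuous at `x0`: for every `ε > 0` there
is `r > 0` with `B(x0,r) ⊆ U` such that
`limsup_k sup_{x ∈ B(x0,r)} ‖f k x - f k x0‖ ≤ ε`, i.e. eventually in `k` we have
`‖f k x - f k x0‖ ≤ ε` for all `x ∈ B(x0,r)`. -/
def AsympEquicontAt {n : ℕ} (U : Set (EuclideanSpace ℝ (Fin n)))
    (f : ℕ → EuclideanSpace ℝ (Fin n) → ℂ) (x0 : EuclideanSpace ℝ (Fin n)) : Prop :=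
  ∀ ε : ℝ, 0 < ε → ∃ r : ℝ, 0 < r ∧ ball x0 r ⊆ U ∧
    ∀ᶠ k in atTop, ∀ x ∈ ball x0 r, ‖f k x - f k x0‖ ≤ ε

/-- A strict delta sequence: smooth compactly supported `ψ k` with `∫ ψ k = 1`,
`supp ψ k ⊆ B(0, r k)` with `r k → 0`, and `sup_k ∫ ‖ψ k‖ < ∞`. -/
def StrictDeltaSeq {n : ℕ} (ψ : ℕ → EuclideanSpace ℝ (Fin n) → ℂ) : Prop :=
  (∀ k, ContDiff ℝ (⊤ : ℕ∞) (ψ k) ∧ HasCompactSupport (ψ k)) ∧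
  (∀ k, ∫ x, ψ k x = 1) ∧
  (∃ r : ℕ → ℝ, Tendsto r atTop (𝓝 0) ∧
    ∀ k, tsupport (ψ k) ⊆ ball (0 : EuclideanSpace ℝ (Fin n)) (r k)) ∧
  (∃ C : ℝ, ∀ k, (∫ x, ‖ψ k x‖) ≤ C)

/-!
Smear each `f k` against a smooth probability density `ψ` concentrated near `x0`. By asymptotic
equicontinuity the average `∫ f k ψ` is within `ε` of `f k x0` for all large `k`, and these
averages converge to `T ψ`. So for every `ε` the values `f k x0` eventually stay within `2 ε` of a
fixed point, i.e. they form a Cauchy sequence.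
-/

open scoped ContDiff

theorem exists_tendsto_of_forall_eventually_dist_le {ι X : Type*} [PseudoMetricSpace X]
    [CompleteSpace X] {l : Filter ι} [l.NeBot] {u : ι → X}
    (hu : ∀ ε > 0, ∃ c, ∀ᶠ i in l, dist (u i) c ≤ ε) : ∃ c, Tendsto u l (𝓝 c) := by
  refine cauchy_map_iff_exists_tendsto.1 (Metric.cauchy_iff.2 ⟨inferInstance, fun ε hε ↦ ?_⟩)
  obtain ⟨c, hc⟩ := hu (ε / 3) (by positivity)
  refine ⟨closedBall c (ε / 3), hc, fun x hx y hy ↦ ?_⟩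
  calc dist x y ≤ dist x c + dist y c := dist_triangle_right x y c
    _ ≤ ε / 3 + ε / 3 := add_le_add hx hy
    _ < ε := by linarith

theorem norm_integral_smul_sub_le_of_integral_eq_one {α F : Type*} [MeasurableSpace α]
    {μ : Measure α} [NormedAddCommGroup F] [NormedSpace ℝ F] [CompleteSpace F] {ψ : α → ℝ}
    (hψ_nonneg : 0 ≤ᵐ[μ] ψ) (hψ_integral : ∫ x, ψ x ∂μ = 1) {g : α → F}
    (hg : AEStronglyMeasurable g μ) {c : F} {ε : ℝ}
    (hgc : ∀ᵐ x ∂μ, ψ x ≠ 0 → ‖g x - c‖ ≤ ε) : ‖∫ x, ψ x • g x ∂μ - c‖ ≤ ε := by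
  have hψ : Integrable ψ μ := integrable_of_integral_eq_one hψ_integral
  have hbound : ∀ᵐ x ∂μ, ‖ψ x • (g x - c)‖ ≤ ψ x * ε := by
    filter_upwards [hψ_nonneg, hgc] with x hx_nonneg hx
    rw [norm_smul, Real.norm_of_nonneg hx_nonneg]
    by_cases hx_zero : ψ x = 0
    · simp [hx_zero]
    · exact mul_le_mul_of_nonneg_left (hx hx_zero) hx_nonneg
  have hdiff : Integrable (fun x ↦ ψ x • (g x - c)) μ :=
    (hψ.mul_const ε).mono' (hψ.1.smul (hg.sub aestronglyMeasurable_const)) hbound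
  have hsplit : ∫ x, ψ x • g x ∂μ = ∫ x, ψ x • (g x - c) ∂μ + c := by
    calc ∫ x, ψ x • g x ∂μ = ∫ x, ψ x • (g x - c) + ψ x • c ∂μ := by simp [smul_sub]
      _ = ∫ x, ψ x • (g x - c) ∂μ + c := by
        rw [integral_add hdiff (hψ.smul_const c), integral_smul_const, hψ_integral, one_smul]
  calc ‖∫ x, ψ x • g x ∂μ - c‖ = ‖∫ x, ψ x • (g x - c) ∂μ‖ := by rw [hsplit, add_sub_cancel_right]
    _ ≤ ∫ x, ψ x * ε ∂μ := norm_integral_le_of_norm_le (hψ.mul_const ε) hbound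
    _ = ε := by rw [integral_mul_const, hψ_integral, one_mul]

section FiniteDimensional

variable {E : Type*} [NormedAddCommGroup E] [NormedSpace ℝ E] [FiniteDimensional ℝ E]
  [MeasurableSpace E] [BorelSpace E] (μ : Measure E) [IsLocallyFiniteMeasure μ]
  [μ.IsOpenPosMeasure]

theorem exists_contDiff_tsupport_subset_integral_eq_one {s : Set E} {x : E} (hs : s ∈ 𝓝 x) :
    ∃ ψ : E → ℝ, ContDiff ℝ ∞ ψ ∧ HasCompactSupport ψ ∧ tsupport ψ ⊆ s ∧ 0 ≤ ψ ∧
      ∫ y, ψ y ∂μ = 1 := by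
  obtain ⟨r, hr, hrs⟩ := nhds_basis_closedBall.mem_iff.1 hs
  let bump : ContDiffBump x := ⟨r / 2, r, half_pos hr, half_lt_self hr⟩
  exact ⟨bump.normed μ, bump.contDiff_normed, bump.hasCompactSupport_normed,
    bump.tsupport_normed_eq.trans_subset hrs, bump.nonneg_normed, bump.integral_normed⟩

variable {μ}

theorem robinson_point_value_exists_general {ι F : Type*} [NormedAddCommGroup F]
    [NormedSpace ℝ F] [CompleteSpace F] {l : Filter ι} [l.NeBot] {Ω : Set E} {x0 : E}
    (hΩ : Ω ∈ 𝓝 x0) {f : ι → E → F} (hf : ∀ i, AEStronglyMeasurable (f i) (μ.restrict Ω))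
    (hconv : ∀ φ : E → ℝ, ContDiff ℝ ∞ φ → HasCompactSupport φ → tsupport φ ⊆ Ω →
      ∃ c, Tendsto (fun i ↦ ∫ x in Ω, φ x • f i x ∂μ) l (𝓝 c))
    (hequi : ∀ ε > 0, ∃ s ∈ 𝓝 x0, ∀ᶠ i in l, ∀ x ∈ s, ‖f i x - f i x0‖ ≤ ε) :
    ∃ c, Tendsto (fun i ↦ f i x0) l (𝓝 c) := by
  refine exists_tendsto_of_forall_eventually_dist_le fun ε hε ↦ ?_
  obtain ⟨s, hs, hfs⟩ := hequi (ε / 2) (half_pos hε)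
  obtain ⟨ψ, hψ_smooth, hψ_compact, hψ_supp, hψ_nonneg, hψ_integral⟩ :=
    exists_contDiff_tsupport_subset_integral_eq_one μ (inter_mem hs hΩ)
  have hψ_mem : ∀ x, ψ x ≠ 0 → x ∈ s ∩ Ω := fun x hx ↦ hψ_supp (subset_tsupport ψ hx)
  have hψ_setIntegral : ∫ x in Ω, ψ x ∂μ = 1 := by
    rw [setIntegral_eq_integral_of_forall_compl_eq_zero, hψ_integral]
    exact fun x hx ↦ by_contra fun hψx ↦ hx (hψ_mem x hψx).2
  obtain ⟨c, hc⟩ := hconv ψ hψ_smooth hψ_compact (hψ_supp.trans Set.inter_subset_right)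
  refine ⟨c, ?_⟩
  filter_upwards [hfs, hc.eventually (closedBall_mem_nhds c (half_pos hε))] with i hi hic
  have haverage : ‖∫ x in Ω, ψ x • f i x ∂μ - f i x0‖ ≤ ε / 2 :=
    norm_integral_smul_sub_le_of_integral_eq_one (.of_forall hψ_nonneg) hψ_setIntegral (hf i)
      (.of_forall fun x hx ↦ hi x (hψ_mem x hx).1)
  calc dist (f i x0) c
      ≤ dist (∫ x in Ω, ψ x • f i x ∂μ) (f i x0) + dist (∫ x in Ω, ψ x • f i x ∂μ) c :=
        dist_triangle_left _ _ _
    _ ≤ ε / 2 + ε / 2 := add_le_add ((dist_eq_norm _ _).trans_le haverage) hic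
    _ = ε := add_halves ε

end FiniteDimensional

section EuclideanSpace

variable {n : ℕ} {U : Set (EuclideanSpace ℝ (Fin n))}

theorem isTestFunction_ofReal {φ : EuclideanSpace ℝ (Fin n) → ℝ} (hφ : ContDiff ℝ ∞ φ)
    (hφ_compact : HasCompactSupport φ) (hφ_supp : tsupport φ ⊆ U) :
    IsTestFunction U (fun x ↦ (φ x : ℂ)) :=
  ⟨Complex.ofRealCLM.contDiff.comp hφ, hφ_compact.comp_left Complex.ofReal_zero,
    (tsupport_comp_subset Complex.ofReal_zero φ).trans hφ_supp⟩

theorem Represents.tendsto_setIntegral_smul {T : (EuclideanSpace ℝ (Fin n) → ℂ) → ℂ}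
    {f : ℕ → EuclideanSpace ℝ (Fin n) → ℂ} (hrep : Represents U T f)
    {φ : EuclideanSpace ℝ (Fin n) → ℝ} (hφ : ContDiff ℝ ∞ φ) (hφ_compact : HasCompactSupport φ)
    (hφ_supp : tsupport φ ⊆ U) :
    Tendsto (fun k ↦ ∫ x in U, φ x • f k x) atTop (𝓝 (T fun x ↦ (φ x : ℂ))) := by
  simpa only [Complex.real_smul, mul_comm] using
    hrep _ (isTestFunction_ofReal hφ hφ_compact hφ_supp)

theorem AsympEquicontAt.exists_mem_nhds {f : ℕ → EuclideanSpace ℝ (Fin n) → ℂ}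
    {x0 : EuclideanSpace ℝ (Fin n)} (hequi : AsympEquicontAt U f x0) {ε : ℝ} (hε : 0 < ε) :
    ∃ s ∈ 𝓝 x0, ∀ᶠ k in atTop, ∀ x ∈ s, ‖f k x - f k x0‖ ≤ ε :=
  let ⟨r, hr, _, hfr⟩ := hequi ε hε
  ⟨ball x0 r, ball_mem_nhds x0 hr, hfr⟩

end EuclideanSpace

/-- Sequential form of Robinson's theorem: a predistribution with an asymptotically
equicontinuous representing sequence at `x0` has a finite value at `x0`, i.e. the
values `f k x0` converge. -/
theorem robinson_point_value_exists {n : ℕ} (hn : 1 ≤ n)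
    (Ω : Set (EuclideanSpace ℝ (Fin n))) (hΩ : IsOpen Ω)
    (x0 : EuclideanSpace ℝ (Fin n)) (hx0 : x0 ∈ Ω)
    (T : (EuclideanSpace ℝ (Fin n) → ℂ) → ℂ) (hT : IsLinearMap ℂ T)
    (f : ℕ → EuclideanSpace ℝ (Fin n) → ℂ)
    (hsmooth : ∀ k, ContDiffOn ℝ (⊤ : ℕ∞) (f k) Ω)
    (hrep : Represents Ω T f)
    (hequi : AsympEquicontAt Ω f x0) :
    ∃ c : ℂ, Tendsto (fun k => f k x0) atTop (𝓝 c) := by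
  exact robinson_point_value_exists_general (hΩ.mem_nhds hx0)
    (fun k ↦ (hsmooth k).continuousOn.aestronglyMeasurable hΩ.measurableSet)
    (fun _ hφ hφ_compact hφ_supp ↦ ⟨_, hrep.tendsto_setIntegral_smul hφ hφ_compact hφ_supp⟩)
    (fun _ hε ↦ hequi.exists_mem_nhds hε)
end
end

section
/- Let n ≥ 1, let Ω ⊆ ℝ^n be open, let x0 ∈ Ω, and let T : (ℝ^n → ℂ) → ℂ be ℂ-linear. If (f_k) and (g_k) are two sequences of functions, each smooth on Ω, that both represent T on Ω and are both asymptotically equicontinuous at x0, then lim_{k→∞} f_k(x0) = lim_{k→∞} g_k(x0). (Sequential form of Robinson's theorem that the point value of a predistribution does not depend on the chosen S-continuous representative.) -/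
open MeasureTheory Filter Metric Topology

noncomputable section

/-!
Averages of `f k` against normalized bumps shrinking to `x0` tend to `f k x0` uniformly for large
`k`, while for each fixed bump they tend, as `k → ∞`, to the value of `T` at that bump. The
Moore-Osgood theorem on interchanging limits then identifies `lim f k x0` with the limit of `T`
along the bumps, which does not depend on `f`.
-/

theorem exists_tendsto_of_tendstoUniformlyOnFilter {ι κ X : Type*} [UniformSpace X]
    [CompleteSpace X] {p : Filter ι} {l : Filter κ} [p.NeBot] [l.NeBot] {F : ι → κ → X}
    {f : κ → X} {L : ι → X} (hF : TendstoUniformlyOnFilter F f p l)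
    (hL : ∀ᶠ i in p, Tendsto (F i) l (𝓝 (L i))) :
    ∃ c, Tendsto L p (𝓝 c) ∧ Tendsto f l (𝓝 c) := by
  have hcauchy : Cauchy (map L p) := by
    rw [cauchy_map_iff, uniformity_hasBasis_closed.tendsto_right_iff]
    refine ⟨inferInstance, fun V ⟨hV, hVclosed⟩ ↦ ?_⟩
    filter_upwards [(hF.uniformCauchySeqOnFilter V hV).curry, hL.prod_mk hL] with ij hij hLij
    exact hVclosed.mem_of_tendsto (hLij.1.prodMk_nhds hLij.2) hij
  obtain ⟨c, hc⟩ := CompleteSpace.complete hcauchy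
  exact ⟨c, hc, hF.tendsto_of_eventually_tendsto hL hc⟩

section WeightedAverage

variable {α E : Type*} [MeasurableSpace α] {μ : Measure α}
  [NormedAddCommGroup E] [NormedSpace ℝ E] [CompleteSpace E]

theorem dist_integral_smul_le_of_integral_eq_one {ψ : α → ℝ} {f : α → E} {c : E} {ε : ℝ}
    (hψ_nonneg : 0 ≤ᵐ[μ] ψ) (hψ_one : ∫ x, ψ x ∂μ = 1) (hf : AEStronglyMeasurable f μ)
    (hfc : ∀ᵐ x ∂μ, x ∈ Function.support ψ → dist (f x) c ≤ ε) :
    dist (∫ x, ψ x • f x ∂μ) c ≤ ε := by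
  have hψ_int : Integrable ψ μ := integrable_of_integral_eq_one hψ_one
  have hbound : ∀ᵐ x ∂μ, ‖ψ x • (f x - c)‖ ≤ ψ x * ε := by
    filter_upwards [hψ_nonneg, hfc] with x hψx hfx
    rw [norm_smul, Real.norm_of_nonneg hψx, ← dist_eq_norm]
    by_cases hx : ψ x = 0
    · simp [hx]
    · exact mul_le_mul_of_nonneg_left (hfx hx) hψx
  have hdiff_int : Integrable (fun x ↦ ψ x • (f x - c)) μ :=
    (hψ_int.mul_const ε).mono' (hψ_int.1.smul (hf.sub aestronglyMeasurable_const))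
      hbound
  have hdiff : ∫ x, ψ x • f x ∂μ - c = ∫ x, ψ x • (f x - c) ∂μ := by
    rw [sub_eq_iff_eq_add]
    calc ∫ x, ψ x • f x ∂μ
        = ∫ x, (ψ x • (f x - c) + ψ x • c) ∂μ := by simp only [← smul_add, sub_add_cancel]
      _ = ∫ x, ψ x • (f x - c) ∂μ + c := by
        rw [integral_add hdiff_int (hψ_int.smul_const c), integral_smul_const, hψ_one, one_smul]
  calc dist (∫ x, ψ x • f x ∂μ) c
      = ‖∫ x, ψ x • (f x - c) ∂μ‖ := by rw [dist_eq_norm, hdiff]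
    _ ≤ ∫ x, ψ x * ε ∂μ := norm_integral_le_of_norm_le (hψ_int.mul_const ε) hbound
    _ = ε := by rw [integral_mul_const, hψ_one, one_mul]

theorem tendstoUniformlyOnFilter_integral_smul [TopologicalSpace α] {ι κ : Type*} {p : Filter ι}
    {l : Filter κ} {ψ : ι → α → ℝ} {f : κ → α → E} {a : α}
    (hψ_nonneg : ∀ᶠ i in p, 0 ≤ᵐ[μ] ψ i) (hψ_one : ∀ᶠ i in p, ∫ x, ψ i x ∂μ = 1)
    (hψ_supp : Tendsto (fun i ↦ Function.support (ψ i)) p (𝓝 a).smallSets)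
    (hf_meas : ∀ᶠ k in l, AEStronglyMeasurable (f k) μ)
    (hf : TendstoUniformlyOnFilter (fun x k ↦ f k x) (fun k ↦ f k a) (𝓝 a) l) :
    TendstoUniformlyOnFilter (fun i k ↦ ∫ x, ψ i x • f k x ∂μ) (fun k ↦ f k a) p l := by
  rw [Metric.tendstoUniformlyOnFilter_iff] at hf ⊢
  intro ε hε
  obtain ⟨nearA, hnearA, large, hlarge, hclose⟩ := eventually_prod_iff.1 (hf (ε / 2) (half_pos hε))
  have hsupp : ∀ᶠ i in p, Function.support (ψ i) ⊆ {x | nearA x} :=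
    tendsto_smallSets_iff.1 hψ_supp _ hnearA
  filter_upwards [(hψ_nonneg.and (hψ_one.and hsupp)).prod_mk (hlarge.and hf_meas)]
    with ik ⟨⟨hi_nonneg, hi_one, hi_supp⟩, hk_large, hk_meas⟩
  rw [dist_comm]
  refine (dist_integral_smul_le_of_integral_eq_one hi_nonneg hi_one hk_meas ?_).trans_lt
    (half_lt_self hε)
  exact .of_forall fun x hx ↦ (dist_comm _ _).trans_le (hclose (hi_supp hx) hk_large).le

end WeightedAverage

section Bump

theorem exists_seq_contDiffBump_tendsto_rOut {E : Type*} (a : E) :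
    ∃ φ : ℕ → ContDiffBump a, Tendsto (fun m ↦ (φ m).rOut) atTop (𝓝 0) :=
  ⟨fun m ↦ ⟨1 / (m + 1) / 2, 1 / (m + 1), half_pos Nat.one_div_pos_of_nat,
    half_lt_self Nat.one_div_pos_of_nat⟩, tendsto_one_div_add_atTop_nhds_zero_nat⟩

theorem eventually_closedBall_subset_of_tendsto {X ι : Type*} [PseudoMetricSpace X] {p : Filter ι}
    {r : ι → ℝ} (hr : Tendsto r p (𝓝 0)) {a : X} {U : Set X} (hU : U ∈ 𝓝 a) :
    ∀ᶠ i in p, closedBall a (r i) ⊆ U :=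
  tendsto_smallSets_iff.1 ((tendsto_closedBall_smallSets a).comp hr) U hU

variable {E : Type*} [NormedAddCommGroup E] [NormedSpace ℝ E] [FiniteDimensional ℝ E]
  [MeasurableSpace E] [BorelSpace E] {μ : Measure E} [IsLocallyFiniteMeasure μ] [μ.IsOpenPosMeasure]

theorem setIntegral_normed_eq_one {a : E} (φ : ContDiffBump a) {U : Set E}
    (hU : closedBall a φ.rOut ⊆ U) : ∫ x in U, φ.normed μ x ∂μ = 1 := by
  rw [setIntegral_eq_integral_of_forall_compl_eq_zero, φ.integral_normed]
  intro x hx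
  rw [← Function.notMem_support, φ.support_normed_eq]
  exact fun hx_ball ↦ hx (hU (ball_subset_closedBall hx_ball))

theorem tendstoUniformlyOnFilter_setIntegral_normed_smul {F ι κ : Type*} [NormedAddCommGroup F]
    [NormedSpace ℝ F] [CompleteSpace F] {p : Filter ι} {l : Filter κ} {a : E}
    {φ : ι → ContDiffBump a} {f : κ → E → F} {U : Set E}
    (hφ : Tendsto (fun i ↦ (φ i).rOut) p (𝓝 0)) (hU : U ∈ 𝓝 a)
    (hf_meas : ∀ᶠ k in l, AEStronglyMeasurable (f k) (μ.restrict U))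
    (hf : TendstoUniformlyOnFilter (fun x k ↦ f k x) (fun k ↦ f k a) (𝓝 a) l) :
    TendstoUniformlyOnFilter (fun i k ↦ ∫ x in U, (φ i).normed μ x • f k x ∂μ)
      (fun k ↦ f k a) p l :=
  tendstoUniformlyOnFilter_integral_smul (.of_forall fun i ↦ .of_forall (φ i).nonneg_normed)
    ((eventually_closedBall_subset_of_tendsto hφ hU).mono fun i ↦ setIntegral_normed_eq_one (φ i))
    (ContDiffBump.tendsto_support_normed_smallSets hφ) hf_meas hf

end Bump

section Representatives

variable {n : ℕ} {U : Set (EuclideanSpace ℝ (Fin n))} {a : EuclideanSpace ℝ (Fin n)}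
  {f : ℕ → EuclideanSpace ℝ (Fin n) → ℂ}

theorem isTestFunction_ofReal_normed (φ : ContDiffBump a) (hU : closedBall a φ.rOut ⊆ U) :
    IsTestFunction U fun x ↦ (φ.normed volume x : ℂ) := by
  refine ⟨Complex.ofRealCLM.contDiff.comp φ.contDiff_normed,
    φ.hasCompactSupport_normed.comp_left Complex.ofReal_zero, ?_⟩
  calc tsupport (Complex.ofReal ∘ φ.normed volume)
      ⊆ tsupport (φ.normed volume) := tsupport_comp_subset Complex.ofReal_zero _
    _ = closedBall a φ.rOut := φ.tsupport_normed_eq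
    _ ⊆ U := hU

theorem Represents.tendsto_setIntegral_normed_smul {T : (EuclideanSpace ℝ (Fin n) → ℂ) → ℂ}
    (hf : Represents U T f) (φ : ContDiffBump a) (hU : closedBall a φ.rOut ⊆ U) :
    Tendsto (fun k ↦ ∫ x in U, φ.normed volume x • f k x) atTop
      (𝓝 (T fun x ↦ (φ.normed volume x : ℂ))) := by
  simpa only [Complex.real_smul, mul_comm] using hf _ (isTestFunction_ofReal_normed φ hU)

theorem AsympEquicontAt.mem_nhds (hf : AsympEquicontAt U f a) : U ∈ 𝓝 a :=
  let ⟨_, hr, hrU, _⟩ := hf 1 one_pos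
  mem_of_superset (ball_mem_nhds a hr) hrU

theorem AsympEquicontAt.tendstoUniformlyOnFilter (hf : AsympEquicontAt U f a) :
    TendstoUniformlyOnFilter (fun x k ↦ f k x) (fun k ↦ f k a) (𝓝 a) atTop := by
  rw [Metric.tendstoUniformlyOnFilter_iff]
  intro ε hε
  obtain ⟨r, hr, -, hclose⟩ := hf (ε / 2) (half_pos hε)
  filter_upwards [(eventually_mem_set.2 (ball_mem_nhds a hr)).prod_mk hclose]
    with xk ⟨hx, hk⟩
  rw [dist_comm, dist_eq_norm]
  exact (hk xk.1 hx).trans_lt (half_lt_self hε)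

end Representatives

theorem robinson_point_value_unique_general {n : ℕ} {Ω : Set (EuclideanSpace ℝ (Fin n))}
    {x0 : EuclideanSpace ℝ (Fin n)} {T : (EuclideanSpace ℝ (Fin n) → ℂ) → ℂ}
    {f g : ℕ → EuclideanSpace ℝ (Fin n) → ℂ}
    (hfmeas : ∀ k, AEStronglyMeasurable (f k) (volume.restrict Ω))
    (hfrep : Represents Ω T f) (hfequi : AsympEquicontAt Ω f x0)
    (hgmeas : ∀ k, AEStronglyMeasurable (g k) (volume.restrict Ω))
    (hgrep : Represents Ω T g) (hgequi : AsympEquicontAt Ω g x0) :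
    ∃ c : ℂ, Tendsto (fun k ↦ f k x0) atTop (𝓝 c) ∧
      Tendsto (fun k ↦ g k x0) atTop (𝓝 c) := by
  obtain ⟨φ, hφ⟩ := exists_seq_contDiffBump_tendsto_rOut x0
  have hφΩ := eventually_closedBall_subset_of_tendsto hφ hfequi.mem_nhds
  have hf_unif := tendstoUniformlyOnFilter_setIntegral_normed_smul hφ hfequi.mem_nhds
    (.of_forall hfmeas) hfequi.tendstoUniformlyOnFilter
  have hg_unif := tendstoUniformlyOnFilter_setIntegral_normed_smul hφ hgequi.mem_nhds
    (.of_forall hgmeas) hgequi.tendstoUniformlyOnFilter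
  obtain ⟨c, hTc, hfc⟩ := exists_tendsto_of_tendstoUniformlyOnFilter hf_unif
    (hφΩ.mono fun m ↦ hfrep.tendsto_setIntegral_normed_smul (φ m))
  exact ⟨c, hfc, hg_unif.tendsto_of_eventually_tendsto
    (hφΩ.mono fun m ↦ hgrep.tendsto_setIntegral_normed_smul (φ m)) hTc⟩

/-- Sequential form of Robinson's theorem: the point value of a predistribution does
not depend on the chosen asymptotically equicontinuous representing sequence:
`lim f k x0 = lim g k x0` (both limits exist and are equal). -/
theorem robinson_point_value_unique {n : ℕ} (hn : 1 ≤ n)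
    (Ω : Set (EuclideanSpace ℝ (Fin n))) (hΩ : IsOpen Ω)
    (x0 : EuclideanSpace ℝ (Fin n)) (hx0 : x0 ∈ Ω)
    (T : (EuclideanSpace ℝ (Fin n) → ℂ) → ℂ) (hT : IsLinearMap ℂ T)
    (f g : ℕ → EuclideanSpace ℝ (Fin n) → ℂ)
    (hfsmooth : ∀ k, ContDiffOn ℝ (⊤ : ℕ∞) (f k) Ω)
    (hfrep : Represents Ω T f)
    (hfequi : AsympEquicontAt Ω f x0)
    (hgsmooth : ∀ k, ContDiffOn ℝ (⊤ : ℕ∞) (g k) Ω)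
    (hgrep : Represents Ω T g)
    (hgequi : AsympEquicontAt Ω g x0) :
    ∃ c : ℂ, Tendsto (fun k => f k x0) atTop (𝓝 c) ∧
      Tendsto (fun k => g k x0) atTop (𝓝 c) := by
  exact robinson_point_value_unique_general
    (fun k ↦ (hfsmooth k).continuousOn.aestronglyMeasurable hΩ.measurableSet) hfrep hfequi
    (fun k ↦ (hgsmooth k).continuousOn.aestronglyMeasurable hΩ.measurableSet) hgrep hgequi
end
end

section
/- Let n ≥ 1, let Ω ⊆ ℝ^n be open, let ω ⊆ Ω be open, let x0 ∈ ω, and let T : (ℝ^n → ℂ) → ℂ be ℂ-linear. Suppose (g_k) is a sequence of functions, each smooth on Ω, representing T on Ω, and (f_k) is a sequence of functions, each smooth on ω, representing T on ω (i.e., ∫_ω f_k φ → T(φ) for every test function φ on ω) and asymptotically equicontinuous at x0. Then there exists a sequence (h_k) of functions, each smooth on Ω, that represents T on Ω, is asymptotically equicontinuous at x0, and satisfies h_k = f_k on a fixed neighborhood of x0 for every k; in particular lim_{k→∞} h_k(x0) = lim_{k→∞} f_k(x0). (Sequential form of the lemma that a linear map admits the Robinson value c at x0 iff its restriction to any open neighborhood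 ω of x0 admits the Robinson value c at x0, proved by gluing representatives with a cutoff function.) -/
open MeasureTheory Filter Metric Topology

noncomputable section

/-!
With a cutoff `χ` supported in `Ω ∩ ω` and equal to `1` near `x0`, put
`h k = χ * f k + (1 - χ) * g k`. Since `h k * φ = g k * φ + f k * (χ * φ) - g k * (χ * φ)` and
`χ * φ` is a test function on both sets, the last two terms contribute `T (χ * φ) - T (χ * φ) = 0`
in the limit, so `h` represents `T`.

For the existence of `lim f k x0`, integrate `f k` against a smooth probability density concentrated
near `x0`: the integrals converge by representation and are eventually within `ε` of `f k x0` by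
equicontinuity, so `f k x0` is a Cauchy sequence.
-/

lemma exists_tendsto_of_forall_eventually_dist_lt {ι α : Type*} [Nonempty ι] [SemilatticeSup ι]
    [PseudoMetricSpace α] [CompleteSpace α] {u : ι → α}
    (hu : ∀ ε > 0, ∃ a, ∀ᶠ i in atTop, dist (u i) a < ε) :
    ∃ c, Tendsto u atTop (𝓝 c) := by
  refine cauchySeq_tendsto_of_complete (Metric.cauchySeq_iff.mpr fun ε hε => ?_)
  obtain ⟨a, ha⟩ := hu (ε / 2) (half_pos hε)
  obtain ⟨N, hN⟩ := eventually_atTop.mp ha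
  exact ⟨N, fun i hi j hj => dist_triangle_right (u i) (u j) a |>.trans_lt <| by
    linarith [hN i hi, hN j hj]⟩

lemma norm_integral_smul_sub_le_of_integral_eq_one_s5 {α E : Type*} [MeasurableSpace α]
    {μ : Measure α} [NormedAddCommGroup E] [NormedSpace ℝ E] [CompleteSpace E]
    {ρ : α → ℝ} {u : α → E} {c : E} {ε : ℝ} (hρ : ∀ x, 0 ≤ ρ x) (hρ_one : ∫ x, ρ x ∂μ = 1)
    (hint : Integrable (fun x => ρ x • u x) μ)
    (hu : ∀ x ∈ Function.support ρ, ‖u x - c‖ ≤ ε) :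
    ‖(∫ x, ρ x • u x ∂μ) - c‖ ≤ ε := by
  have hρ_int : Integrable ρ μ := integrable_of_integral_eq_one hρ_one
  have hbound : ∀ x, ‖ρ x • (u x - c)‖ ≤ ρ x * ε := fun x => by
    rw [norm_smul, Real.norm_of_nonneg (hρ x)]
    by_cases hx : ρ x = 0
    · simp [hx]
    · exact mul_le_mul_of_nonneg_left (hu x hx) (hρ x)
  calc ‖(∫ x, ρ x • u x ∂μ) - c‖
      = ‖∫ x, ρ x • (u x - c) ∂μ‖ := by
        simp only [smul_sub]
        rw [integral_sub hint (hρ_int.smul_const c), integral_smul_const, hρ_one, one_smul]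
    _ ≤ ∫ x, ρ x * ε ∂μ :=
        norm_integral_le_of_norm_le (hρ_int.mul_const ε) (ae_of_all μ hbound)
    _ = ε := by rw [integral_mul_const, hρ_one, one_mul]

lemma exists_contDiffBump_closedBall_rOut_subset {E : Type*} [PseudoMetricSpace E] {c : E}
    {s : Set E} (hs : s ∈ 𝓝 c) : ∃ b : ContDiffBump c, closedBall c b.rOut ⊆ s := by
  obtain ⟨r, hr, hrs⟩ := Metric.nhds_basis_closedBall.mem_iff.mp hs
  exact ⟨⟨r / 2, r, half_pos hr, half_lt_self hr⟩, hrs⟩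

section CutoffGlue

/-- The function obtained by gluing `u` and `v` with the cutoff `χ`: it is `u` where `χ = 1` and `v`
where `χ = 0`. No regularity is built in, and `u` may take arbitrary values off the support
of `χ`. -/
def cutoffGlue {α R : Type*} [Ring R] (χ u v : α → R) : α → R :=
  fun x => χ x * u x + (1 - χ x) * v x

lemma cutoffGlue_of_eq_one {α R : Type*} [Ring R] {χ : α → R} {x : α} (hx : χ x = 1)
    (u v : α → R) : cutoffGlue χ u v x = u x := by
  simp [cutoffGlue, hx]

lemma cutoffGlue_of_eq_zero {α R : Type*} [Ring R] {χ : α → R} {x : α} (hx : χ x = 0)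
    (u v : α → R) : cutoffGlue χ u v x = v x := by
  simp [cutoffGlue, hx]

lemma contDiffOn_cutoffGlue {𝕜 E A : Type*} [NontriviallyNormedField 𝕜] [NormedAddCommGroup E]
    [NormedSpace 𝕜 E] [NormedRing A] [NormedAlgebra 𝕜 A] {m : WithTop ℕ∞} {s t : Set E}
    {χ u v : E → A} (hχ : ContDiff 𝕜 m χ) (hχs : tsupport χ ⊆ interior s)
    (hu : ContDiffOn 𝕜 m u s) (hv : ContDiffOn 𝕜 m v t) :
    ContDiffOn 𝕜 m (cutoffGlue χ u v) t := by
  intro x hx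
  by_cases hxχ : x ∈ tsupport χ
  · have hux : ContDiffWithinAt 𝕜 m u t x :=
      (hu.contDiffAt (mem_interior_iff_mem_nhds.mp (hχs hxχ))).contDiffWithinAt
    have hχx : ContDiffWithinAt 𝕜 m χ t x := hχ.contDiffWithinAt
    exact (hχx.mul hux).add ((contDiffWithinAt_const.sub hχx).mul (hv x hx))
  · have hglue : cutoffGlue χ u v =ᶠ[𝓝 x] v :=
      (notMem_tsupport_iff_eventuallyEq.mp hxχ).mono fun y hy => cutoffGlue_of_eq_zero hy u v
    exact (hv x hx).congr_of_eventuallyEq_of_mem (hglue.filter_mono nhdsWithin_le_nhds) hx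

end CutoffGlue

section Representatives

variable {n : ℕ} {U V : Set (EuclideanSpace ℝ (Fin n))} {x0 : EuclideanSpace ℝ (Fin n)}

namespace IsTestFunction

variable {χ φ u : EuclideanSpace ℝ (Fin n) → ℂ}

lemma mono (hφ : IsTestFunction U φ) (hUV : U ⊆ V) : IsTestFunction V φ :=
  ⟨hφ.1, hφ.2.1, hφ.2.2.trans hUV⟩

lemma ofReal {ρ : EuclideanSpace ℝ (Fin n) → ℝ} (hρ : ContDiff ℝ (⊤ : ℕ∞) ρ)
    (hρc : HasCompactSupport ρ) (hρU : tsupport ρ ⊆ U) :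
    IsTestFunction U (fun x => (ρ x : ℂ)) :=
  ⟨Complex.ofRealCLM.contDiff.comp hρ, hρc.comp_left Complex.ofReal_zero,
    (tsupport_comp_subset Complex.ofReal_zero ρ).trans hρU⟩

lemma mul_contDiff (hχ : IsTestFunction U χ) (hφ : ContDiff ℝ (⊤ : ℕ∞) φ) :
    IsTestFunction U (fun x => χ x * φ x) :=
  ⟨hχ.1.mul hφ, hχ.2.1.mul_right, tsupport_mul_subset_left.trans hχ.2.2⟩

lemma setIntegral_mul (hφ : IsTestFunction U φ) (u : EuclideanSpace ℝ (Fin n) → ℂ) :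
    ∫ x in U, u x * φ x = ∫ x, u x * φ x :=
  setIntegral_eq_integral_of_forall_compl_eq_zero fun x hx => by
    rw [image_eq_zero_of_notMem_tsupport fun hxφ => hx (hφ.2.2 hxφ), mul_zero]

lemma integrable_mul (hφ : IsTestFunction U φ) (hu : ContinuousOn u U) :
    Integrable (fun x => u x * φ x) := by
  have hcont : ContinuousOn (fun x => u x * φ x) (tsupport φ) :=
    (hu.mono hφ.2.2).mul hφ.1.continuous.continuousOn
  refine (integrableOn_iff_integrable_of_support_subset ?_).mp (hcont.integrableOn_compact hφ.2.1)
  exact (Function.support_mul_subset_right u φ).trans (subset_tsupport φ)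

lemma exists_eventuallyEq_one (hU : U ∈ 𝓝 x0) :
    ∃ χ : EuclideanSpace ℝ (Fin n) → ℂ, IsTestFunction U χ ∧ χ =ᶠ[𝓝 x0] 1 := by
  obtain ⟨b, hbU⟩ := exists_contDiffBump_closedBall_rOut_subset hU
  refine ⟨fun x => (b x : ℂ),
    .ofReal b.contDiff b.hasCompactSupport (b.tsupport_eq.trans_subset hbU),
    b.eventuallyEq_one.mono fun x hx => ?_⟩
  simp only [hx, Pi.one_apply, Complex.ofReal_one]

end IsTestFunction

variable {T : (EuclideanSpace ℝ (Fin n) → ℂ) → ℂ} {f g : ℕ → EuclideanSpace ℝ (Fin n) → ℂ}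

lemma AsympEquicontAt.congr_of_mem_nhds (hf : AsympEquicontAt U f x0) (hV : V ∈ 𝓝 x0)
    {W : Set (EuclideanSpace ℝ (Fin n))} (hW : W ∈ 𝓝 x0) (hfg : ∀ k, ∀ x ∈ W, g k x = f k x) :
    AsympEquicontAt V g x0 := by
  intro ε hε
  obtain ⟨r, hr, -, hfr⟩ := hf ε hε
  obtain ⟨s, hs, hsVW⟩ := Metric.mem_nhds_iff.mp (inter_mem hV hW)
  refine ⟨min r s, lt_min hr hs,
    (ball_subset_ball (min_le_right r s)).trans fun x hx => (hsVW hx).1, ?_⟩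
  filter_upwards [hfr] with k hk x hx
  rw [hfg k x (hsVW (ball_subset_ball (min_le_right r s) hx)).2, hfg k x0 (mem_of_mem_nhds hW)]
  exact hk x (ball_subset_ball (min_le_left r s) hx)

lemma represents_cutoffGlue {χ : EuclideanSpace ℝ (Fin n) → ℂ} (hf : Represents U T f)
    (hg : Represents V T g) (hf_cont : ∀ k, ContinuousOn (f k) U)
    (hg_cont : ∀ k, ContinuousOn (g k) V) (hχU : IsTestFunction U χ) (hχV : IsTestFunction V χ) :
    Represents V T (fun k => cutoffGlue χ (f k) (g k)) := by
  intro φ hφ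
  have hχφU := hχU.mul_contDiff hφ.1
  have hχφV := hχV.mul_contDiff hφ.1
  have hlim := (hg φ hφ).add ((hf _ hχφU).sub (hg _ hχφV))
  rw [sub_self, add_zero] at hlim
  refine hlim.congr fun k => ?_
  have hgφ := hφ.integrable_mul (hg_cont k)
  have hfχφ := hχφU.integrable_mul (hf_cont k)
  have hgχφ := hχφV.integrable_mul (hg_cont k)
  have hsub : Integrable fun x => f k x * (χ x * φ x) - g k x * (χ x * φ x) := hfχφ.sub hgχφ
  rw [hφ.setIntegral_mul, hφ.setIntegral_mul, hχφU.setIntegral_mul, hχφV.setIntegral_mul,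
    ← integral_sub hfχφ hgχφ, ← integral_add hgφ hsub]
  refine integral_congr_ae (ae_of_all _ fun x => ?_)
  simp only [cutoffGlue]
  ring

namespace Represents

lemma exists_eventually_dist_lt (hrep : Represents U T f) (hcont : ∀ k, ContinuousOn (f k) U)
    (hequi : AsympEquicontAt U f x0) {ε : ℝ} (hε : 0 < ε) :
    ∃ a, ∀ᶠ k in atTop, dist (f k x0) a < ε := by
  obtain ⟨r, hr, hrU, hfr⟩ := hequi (ε / 2) (half_pos hε)
  obtain ⟨b, hbr⟩ := exists_contDiffBump_closedBall_rOut_subset (ball_mem_nhds x0 hr)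
  let ρ : EuclideanSpace ℝ (Fin n) → ℝ := b.normed volume
  have hρr : tsupport ρ ⊆ ball x0 r := b.tsupport_normed_eq.trans_subset hbr
  have hφ : IsTestFunction U (fun x => (ρ x : ℂ)) :=
    .ofReal b.contDiff_normed b.hasCompactSupport_normed (hρr.trans hrU)
  refine ⟨T fun x => (ρ x : ℂ), ?_⟩
  filter_upwards [hfr, Metric.tendsto_nhds.mp (hrep _ hφ) (ε / 2) (half_pos hε)] with k hk hkT
  have hsmul : ∀ x, f k x * (ρ x : ℂ) = ρ x • f k x := fun x => by
    rw [Complex.real_smul, mul_comm]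
  have hint := hφ.integrable_mul (hcont k)
  rw [hφ.setIntegral_mul] at hkT
  simp only [hsmul] at hkT hint
  have havg : dist (∫ x, ρ x • f k x) (f k x0) ≤ ε / 2 := by
    rw [dist_eq_norm]
    exact norm_integral_smul_sub_le_of_integral_eq_one_s5 b.nonneg_normed b.integral_normed hint
      fun x hx => hk x (hρr (subset_tsupport ρ hx))
  calc dist (f k x0) (T fun x => (ρ x : ℂ))
      ≤ dist (∫ x, ρ x • f k x) (f k x0)
        + dist (∫ x, ρ x • f k x) (T fun x => (ρ x : ℂ)) := dist_triangle_left _ _ _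
    _ < ε := by linarith

lemma exists_tendsto_apply (hrep : Represents U T f) (hcont : ∀ k, ContinuousOn (f k) U)
    (hequi : AsympEquicontAt U f x0) : ∃ c, Tendsto (fun k => f k x0) atTop (𝓝 c) :=
  exists_tendsto_of_forall_eventually_dist_lt fun _ hε =>
    hrep.exists_eventually_dist_lt hcont hequi hε

end Represents

end Representatives

theorem robinson_value_local_general {n : ℕ} {m : ℕ∞} {Ω ω : Set (EuclideanSpace ℝ (Fin n))}
    {x0 : EuclideanSpace ℝ (Fin n)} (hΩ : Ω ∈ 𝓝 x0) (hω : ω ∈ 𝓝 x0)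
    {T : (EuclideanSpace ℝ (Fin n) → ℂ) → ℂ} {f g : ℕ → EuclideanSpace ℝ (Fin n) → ℂ}
    (hg_smooth : ∀ k, ContDiffOn ℝ m (g k) Ω) (hg_rep : Represents Ω T g)
    (hf_smooth : ∀ k, ContDiffOn ℝ m (f k) ω) (hf_rep : Represents ω T f)
    (hf_equi : AsympEquicontAt ω f x0) :
    ∃ h : ℕ → EuclideanSpace ℝ (Fin n) → ℂ,
      (∀ k, ContDiffOn ℝ m (h k) Ω) ∧ Represents Ω T h ∧ AsympEquicontAt Ω h x0 ∧
      (∃ V : Set (EuclideanSpace ℝ (Fin n)), V ∈ 𝓝 x0 ∧ ∀ k, ∀ x ∈ V, h k x = f k x) ∧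
      (∃ c : ℂ, Tendsto (fun k => h k x0) atTop (𝓝 c) ∧
        Tendsto (fun k => f k x0) atTop (𝓝 c)) := by
  obtain ⟨χ, hχ, hχ_one⟩ :=
    IsTestFunction.exists_eventuallyEq_one (inter_mem hΩ (interior_mem_nhds.mpr hω))
  have hχΩ : IsTestFunction Ω χ := hχ.mono Set.inter_subset_left
  have hχω : IsTestFunction (interior ω) χ := hχ.mono Set.inter_subset_right
  have hf_cont : ∀ k, ContinuousOn (f k) ω := fun k => (hf_smooth k).continuousOn
  have hg_cont : ∀ k, ContinuousOn (g k) Ω := fun k => (hg_smooth k).continuousOn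
  have hglue : ∀ k, ∀ x ∈ {x | χ x = 1}, cutoffGlue χ (f k) (g k) x = f k x :=
    fun k _ hx => cutoffGlue_of_eq_one hx (f k) (g k)
  obtain ⟨c, hc⟩ := hf_rep.exists_tendsto_apply hf_cont hf_equi
  exact ⟨fun k => cutoffGlue χ (f k) (g k),
    fun k => contDiffOn_cutoffGlue (hχ.1.of_le (mod_cast le_top)) hχω.2.2 (hf_smooth k)
      (hg_smooth k),
    represents_cutoffGlue hf_rep hg_rep hf_cont hg_cont (hχω.mono interior_subset) hχΩ,
    hf_equi.congr_of_mem_nhds hΩ hχ_one hglue,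
    ⟨_, hχ_one, hglue⟩,
    c, hc.congr fun k => (hglue k x0 hχ_one.self_of_nhds).symm, hc⟩

/-- Sequential form of the localization lemma: if `g` represents `T` on `Ω` and `f`
represents `T` on an open `ω ⊆ Ω` and is asymptotically equicontinuous at `x0 ∈ ω`,
then there is a sequence `h` representing `T` on `Ω`, asymptotically equicontinuous at
`x0`, agreeing with `f` on a fixed neighborhood of `x0`; in particular
`lim h k x0 = lim f k x0`. -/
theorem robinson_value_local {n : ℕ} (hn : 1 ≤ n)
    (Ω ω : Set (EuclideanSpace ℝ (Fin n))) (hΩ : IsOpen Ω) (hω : IsOpen ω)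
    (hωΩ : ω ⊆ Ω)
    (x0 : EuclideanSpace ℝ (Fin n)) (hx0 : x0 ∈ ω)
    (T : (EuclideanSpace ℝ (Fin n) → ℂ) → ℂ) (hT : IsLinearMap ℂ T)
    (g : ℕ → EuclideanSpace ℝ (Fin n) → ℂ)
    (hgsmooth : ∀ k, ContDiffOn ℝ (⊤ : ℕ∞) (g k) Ω)
    (hgrep : Represents Ω T g)
    (f : ℕ → EuclideanSpace ℝ (Fin n) → ℂ)
    (hfsmooth : ∀ k, ContDiffOn ℝ (⊤ : ℕ∞) (f k) ω)
    (hfrep : Represents ω T f)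
    (hfequi : AsympEquicontAt ω f x0) :
    ∃ h : ℕ → EuclideanSpace ℝ (Fin n) → ℂ,
      (∀ k, ContDiffOn ℝ (⊤ : ℕ∞) (h k) Ω) ∧ Represents Ω T h ∧ AsympEquicontAt Ω h x0 ∧
      (∃ V : Set (EuclideanSpace ℝ (Fin n)), V ∈ 𝓝 x0 ∧ ∀ k, ∀ x ∈ V, h k x = f k x) ∧
      (∃ c : ℂ, Tendsto (fun k => h k x0) atTop (𝓝 c) ∧
        Tendsto (fun k => f k x0) atTop (𝓝 c)) := by
  exact robinson_value_local_general (hΩ.mem_nhds (hωΩ hx0)) (hω.mem_nhds hx0) hgsmooth hgrep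
    hfsmooth hfrep hfequi
end
end

section
/- Let α > 0 and 0 < β < 1, and define f : ℝ → ℂ by f(x) = |x|^{-β} e^{i/|x|^{α}} for x ≠ 0 and f(0) = 0. Then f is locally integrable on ℝ and f has the Łojasiewicz value 0 at 0: for every test function φ on ℝ, ∫_ℝ f(ε x) φ(x) dx → 0 as ε → 0 through nonzero reals. (The case of the family |x|^{-β} e^{i/|x|^{α}}, α, β > 0, in which the function is locally integrable and hence defines a regular distribution.) -/
open MeasureTheory Filter Metric Topology

noncomputable section

/-!
Since `f` is even and `x ^ (-β) e^{i / x ^ α}` is homogeneous up to a change of frequency,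
`∫ f (ε x) φ x dx` equals `|ε| ^ (-β)` times the oscillatory integral of `x ^ (-β) e^{i L / x ^ α}`
against `φ x + φ (-x)` over `(0, ∞)`, with frequency `L = |ε| ^ (-α) → ∞`. The phase has no
stationary point, and each integration by parts gains a factor `L⁻¹` while raising the exponent of
`x`, so that no boundary term appears at `0`. Hence `N` integrations by parts bound the integral by
`O(|ε| ^ (N α - β))`.
-/

open Set Asymptotics

/-- The kernel `x ^ s e^{i L x ^ (-α)}` of frequency `L`, meant for `x > 0`; its even extension to
the line is `x ↦ oscKernel α s L |x|`. -/
def oscKernel (α s L x : ℝ) : ℂ :=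
  (x ^ s : ℝ) * Complex.exp ((L * x ^ (-α) : ℝ) * Complex.I)

section Kernel

variable {α s L x : ℝ}

lemma norm_oscKernel : ‖oscKernel α s L x‖ = |x ^ s| := by
  rw [oscKernel, norm_mul, Complex.norm_exp_ofReal_mul_I, mul_one, Complex.norm_real,
    Real.norm_eq_abs]

lemma measurable_oscKernel : Measurable (oscKernel α s L) := by
  unfold oscKernel
  fun_prop

lemma oscKernel_mul {t : ℝ} (ht : 0 ≤ t) (hx : 0 ≤ x) :
    oscKernel α s L (t * x) = (t ^ s : ℝ) * oscKernel α s (L * t ^ (-α)) x := by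
  simp only [oscKernel, Real.mul_rpow ht hx, Complex.ofReal_mul, mul_assoc]

lemma oscKernel_zero (hs : s ≠ 0) : oscKernel α s L 0 = 0 := by
  rw [oscKernel, Real.zero_rpow hs, Complex.ofReal_zero, zero_mul]

lemma continuousAt_oscKernel_zero (hs : 0 < s) : ContinuousAt (oscKernel α s L) 0 := by
  have hpow : Tendsto (fun x : ℝ ↦ |x ^ s|) (𝓝 0) (𝓝 0) := by
    simpa [Real.zero_rpow hs.ne'] using
      (Real.continuousAt_rpow_const 0 s (Or.inr hs.le)).abs.tendsto
  rw [ContinuousAt, oscKernel_zero hs.ne', tendsto_zero_iff_norm_tendsto_zero]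
  simpa only [norm_oscKernel] using hpow

lemma hasDerivAt_oscKernel (hx : 0 < x) :
    HasDerivAt (oscKernel α s L)
      (s * oscKernel α (s - 1) L x - Complex.I * (L * α) * oscKernel α (s - α - 1) L x) x := by
  have hpow (p : ℝ) : HasDerivAt (fun y : ℝ ↦ y ^ p) (p * x ^ (p - 1)) x :=
    Real.hasDerivAt_rpow_const (Or.inl hx.ne')
  have hsplit : x ^ (s - α - 1) = x ^ s * x ^ (-α - 1) := by
    rw [← Real.rpow_add hx]
    ring_nf
  refine ((hpow s).ofReal_comp.mul
    (((hpow (-α)).const_mul L).ofReal_comp.mul_const Complex.I).cexp).congr_deriv ?_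
  simp only [oscKernel, hsplit]
  push_cast
  ring

lemma locallyIntegrable_oscKernel_abs (hs : -1 < s) :
    LocallyIntegrable fun x ↦ oscKernel α s L |x| := by
  refine locallyIntegrable_of_norm_le_rpow (C := 1) (α := -s) (by simp)
    (by simpa using neg_lt.mp hs) (ae_of_all _ fun x ↦ ?_)
    (measurable_oscKernel.comp measurable_norm).aestronglyMeasurable
  rw [norm_oscKernel, neg_neg, one_mul, Real.norm_eq_abs,
    abs_of_nonneg (Real.rpow_nonneg (abs_nonneg x) s)]

end Kernel

section Integral

variable {E : Type*} [NormedAddCommGroup E] [NormedSpace ℂ E] {α s L : ℝ} {ψ φ : ℝ → E}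

lemma integral_comp_abs_smul {g : ℝ → ℂ} (h : Integrable fun x ↦ g |x| • φ x) :
    ∫ x, g |x| • φ x = ∫ x in Ioi 0, g x • (φ x + φ (-x)) := by
  have hneg : Integrable fun x ↦ g |x| • φ (-x) := by simpa only [abs_neg] using h.comp_neg
  have hleft : ∫ x in Iic 0, g |x| • φ x = ∫ x in Ioi 0, g |x| • φ (-x) := by
    simpa using (integral_comp_neg_Ioi 0 fun x ↦ g |x| • φ x).symm
  calc ∫ x, g |x| • φ x
      = (∫ x in Ioi 0, g |x| • φ (-x)) + ∫ x in Ioi 0, g |x| • φ x := by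
        rw [← hleft, intervalIntegral.integral_Iic_add_Ioi h.integrableOn h.integrableOn]
    _ = ∫ x in Ioi 0, g |x| • (φ x + φ (-x)) := by
        rw [add_comm, ← integral_add h.integrableOn hneg.integrableOn]
        simp only [smul_add]
    _ = ∫ x in Ioi 0, g x • (φ x + φ (-x)) :=
        setIntegral_congr_fun measurableSet_Ioi fun x hx ↦ by
          simp only [abs_of_pos (mem_Ioi.mp hx)]

/-- The oscillatory integral `∫₀^∞ x ^ s e^{i L x ^ (-α)} ψ(x) dx`, with the amplitude `ψ` kept
apart from the power of `x` because integration by parts trades one for the other. -/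
def oscIntegral (α s L : ℝ) (ψ : ℝ → E) : E :=
  ∫ x in Ioi 0, oscKernel α s L x • ψ x

lemma integrable_oscKernel_abs_smul (hs : -1 < s) (hψ : Continuous ψ)
    (hc : HasCompactSupport ψ) : Integrable fun x ↦ oscKernel α s L |x| • ψ x :=
  (locallyIntegrable_oscKernel_abs hs).integrable_smul_right_of_hasCompactSupport hψ hc

lemma integrableOn_oscKernel_smul (hs : -1 < s) (hψ : Continuous ψ)
    (hc : HasCompactSupport ψ) : IntegrableOn (fun x ↦ oscKernel α s L x • ψ x) (Ioi 0) :=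
  (integrable_oscKernel_abs_smul (α := α) (L := L) hs hψ hc).integrableOn.congr_fun
    (fun x hx ↦ by simp only [abs_of_pos (mem_Ioi.mp hx)]) measurableSet_Ioi

lemma norm_oscIntegral_le : ‖oscIntegral α s L ψ‖ ≤ ∫ x in Ioi 0, |x ^ s| * ‖ψ x‖ := by
  simpa only [oscIntegral, norm_smul, norm_oscKernel] using
    norm_integral_le_integral_norm (μ := volume.restrict (Ioi 0)) fun x ↦ oscKernel α s L x • ψ x

lemma integral_oscKernel_comp_mul_smul {ε : ℝ} (hs : -1 < s) (hφ : Continuous φ)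
    (hc : HasCompactSupport φ) :
    ∫ x, oscKernel α s L |ε * x| • φ x =
      ((|ε| ^ s : ℝ) : ℂ) • oscIntegral α s (L * |ε| ^ (-α)) fun x ↦ φ x + φ (-x) := by
  simp only [abs_mul, oscKernel_mul (abs_nonneg ε) (abs_nonneg _), mul_smul]
  rw [integral_smul, integral_comp_abs_smul (integrable_oscKernel_abs_smul hs hφ hc), oscIntegral]

lemma hasDerivAt_oscKernel_smul {x : ℝ} (hx : 0 < x) (hψ : DifferentiableAt ℝ ψ x) :
    HasDerivAt (fun y ↦ oscKernel α (s + α + 1) L y • ψ y)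
      (((s + α + 1 : ℝ) : ℂ) • oscKernel α (s + α) L x • ψ x +
        oscKernel α (s + α + 1) L x • deriv ψ x -
        (Complex.I * (L * α)) • oscKernel α s L x • ψ x) x := by
  refine ((hasDerivAt_oscKernel hx).smul hψ.hasDerivAt).congr_deriv ?_
  rw [add_sub_cancel_right, show s + α + 1 - α - 1 = s by ring]
  module

variable [CompleteSpace E]

-- Integration by parts: the integral over `(0, ∞)` of the derivative of the compactly supported
-- function `x ^ (s + α + 1) e^{i L x ^ (-α)} ψ(x)`, which vanishes at `0`, is zero.
lemma smul_oscIntegral_eq_add_oscIntegral_deriv (hs : -1 < s) (hsα : -1 < s + α)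
    (hψ : ContDiff ℝ 1 ψ) (hc : HasCompactSupport ψ) :
    (Complex.I * (L * α)) • oscIntegral α s L ψ =
      ((s + α + 1 : ℝ) : ℂ) • oscIntegral α (s + α) L ψ +
        oscIntegral α (s + α + 1) L (deriv ψ) := by
  have hp : 0 < s + α + 1 := by linarith
  have hint_s := (integrableOn_oscKernel_smul (α := α) (L := L) hs hψ.continuous hc).fun_smul
    (Complex.I * (L * α))
  have hint_add := (integrableOn_oscKernel_smul (α := α) (L := L) hsα hψ.continuous hc).fun_smul
    ((s + α + 1 : ℝ) : ℂ)
  have hint_deriv := integrableOn_oscKernel_smul (α := α) (s := s + α + 1) (L := L) (by linarith)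
    (hψ.continuous_deriv le_rfl) hc.deriv
  have hcont : ContinuousWithinAt (fun x ↦ oscKernel α (s + α + 1) L x • ψ x) (Ici 0) 0 :=
    ((continuousAt_oscKernel_zero hp).smul hψ.continuous.continuousAt).continuousWithinAt
  have hinfty : Tendsto (fun x ↦ oscKernel α (s + α + 1) L x • ψ x) atTop (𝓝 0) :=
    hc.smul_left.is_zero_at_infty.mono_left atTop_le_cocompact
  have hFTC := integral_Ioi_of_hasDerivAt_of_tendsto hcont
    (fun x hx ↦ hasDerivAt_oscKernel_smul hx (hψ.differentiable one_ne_zero x))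
    ((hint_add.fun_add hint_deriv).sub hint_s) hinfty
  rw [oscKernel_zero hp.ne', zero_smul, sub_zero,
    integral_sub (hint_add.fun_add hint_deriv) hint_s, integral_add hint_add hint_deriv,
    integral_smul, integral_smul, sub_eq_zero] at hFTC
  exact hFTC.symm

lemma oscIntegral_isBigO_inv_pow (hα : 0 < α) (N : ℕ) (hs : -1 < s) (hψ : ContDiff ℝ N ψ)
    (hc : HasCompactSupport ψ) :
    (fun L ↦ oscIntegral α s L ψ) =O[atTop] fun L : ℝ ↦ (L ^ N)⁻¹ := by
  induction N generalizing s ψ with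
  | zero =>
    refine .of_bound (∫ x in Ioi 0, |x ^ s| * ‖ψ x‖) (Eventually.of_forall fun L ↦ ?_)
    simpa using norm_oscIntegral_le
  | succ N ih =>
    have hψ' : ContDiff ℝ N (deriv ψ) := (contDiff_succ_iff_deriv.mp (by exact_mod_cast hψ)).2.2
    have hψN : ContDiff ℝ N ψ := hψ.of_le (by exact_mod_cast N.le_succ)
    have hψ1 : ContDiff ℝ 1 ψ := hψ.of_le (by exact_mod_cast N.succ_pos)
    have hparts : (fun L : ℝ ↦ ((s + α + 1 : ℝ) : ℂ) • oscIntegral α (s + α) L ψ +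
        oscIntegral α (s + α + 1) L (deriv ψ)) =O[atTop] fun L : ℝ ↦ (L ^ N)⁻¹ :=
      ((ih (by linarith) hψN hc).const_smul_left _).add (ih (by linarith) hψ' hc.deriv)
    have hfactor : (fun L : ℝ ↦ (Complex.I * (L * α))⁻¹) =O[atTop] fun L : ℝ ↦ L⁻¹ :=
      .of_bound α⁻¹ (Eventually.of_forall fun L ↦ by simp [abs_of_pos hα])
    refine (hfactor.smul hparts).congr' ?_ (Eventually.of_forall fun L ↦ ?_)
    · filter_upwards [eventually_gt_atTop 0] with L hL
      rw [← smul_oscIntegral_eq_add_oscIntegral_deriv hs (by linarith) hψ1 hc, inv_smul_smul₀]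
      simp [hL.ne', hα.ne']
    · simp [pow_succ, mul_comm]

lemma integral_oscKernel_comp_mul_smul_isBigO (hα : 0 < α) (hs : -1 < s) (N : ℕ)
    (hφ : ContDiff ℝ N φ) (hc : HasCompactSupport φ) :
    (fun ε : ℝ ↦ ∫ x, oscKernel α s 1 |ε * x| • φ x) =O[𝓝[≠] 0] fun ε ↦ |ε| ^ (s + N * α) := by
  have hfreq : Tendsto (fun ε : ℝ ↦ |ε| ^ (-α)) (𝓝[≠] 0) atTop :=
    (tendsto_rpow_neg_nhdsGT_zero (neg_lt_zero.mpr hα)).comp tendsto_abs_nhdsNE_zero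
  have hdecay := (oscIntegral_isBigO_inv_pow hα N hs (hφ.add (hφ.comp contDiff_neg))
    (hc.add (hc.comp_homeomorph (Homeomorph.neg ℝ)))).comp_tendsto hfreq
  have hscale : (fun ε : ℝ ↦ ((|ε| ^ s : ℝ) : ℂ)) =O[𝓝[≠] 0] fun ε ↦ |ε| ^ s :=
    isBigO_of_le _ fun ε ↦ by simp
  refine (hscale.smul hdecay).congr' (Eventually.of_forall fun ε ↦ ?_) ?_
  · simp only [integral_oscKernel_comp_mul_smul hs hφ.continuous hc, one_mul, Function.comp_def]
  · filter_upwards [self_mem_nhdsWithin] with ε hε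
    have hε : 0 < |ε| := abs_pos.mpr hε
    rw [Function.comp_apply, smul_eq_mul, ← Real.rpow_natCast, ← Real.rpow_mul hε.le,
      ← Real.rpow_neg hε.le, ← Real.rpow_add hε]
    ring_nf

lemma tendsto_integral_oscKernel_comp_mul_smul (hα : 0 < α) (hs : -1 < s) {N : ℕ}
    (hN : 0 < s + N * α) (hφ : ContDiff ℝ N φ) (hc : HasCompactSupport φ) :
    Tendsto (fun ε : ℝ ↦ ∫ x, oscKernel α s 1 |ε * x| • φ x) (𝓝[≠] 0) (𝓝 0) := by
  have hpow : ContinuousAt (fun ε : ℝ ↦ |ε| ^ (s + N * α)) 0 :=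
    continuousAt_id.abs.rpow_const (Or.inr hN.le)
  refine (integral_oscKernel_comp_mul_smul_isBigO hα hs N hφ hc).trans_tendsto ?_
  simpa [Real.zero_rpow hN.ne'] using hpow.tendsto.mono_left nhdsWithin_le_nhds

end Integral

theorem lojasiewicz_value_oscillatory_family_general {E : Type*} [NormedAddCommGroup E]
    [NormedSpace ℂ E] [CompleteSpace E] (α β : ℝ) (hα : 0 < α) (hβ : β < 1) (f : ℝ → ℂ)
    (hf : ∀ x : ℝ, x ≠ 0 →
      f x = (|x| ^ (-β) : ℝ) * Complex.exp (Complex.I / ((|x| ^ α : ℝ) : ℂ))) :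
    LocallyIntegrable f volume ∧
    (∀ (N : ℕ) (φ : ℝ → E), β < N * α → ContDiff ℝ N φ → HasCompactSupport φ →
      Tendsto (fun ε : ℝ => ∫ x, f (ε * x) • φ x) (𝓝[≠] (0 : ℝ)) (𝓝 0)) := by
  have hs : -1 < -β := neg_lt_neg hβ
  have hfK : ∀ x ≠ 0, oscKernel α (-β) 1 |x| = f x := fun x hx ↦ by
    rw [hf x hx, oscKernel, one_mul, Real.rpow_neg (abs_nonneg x) α, Complex.ofReal_inv,
      inv_mul_eq_div]
  have hae : ∀ᵐ x : ℝ, x ≠ 0 := Measure.ae_ne volume 0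
  refine ⟨(locallyIntegrable_oscKernel_abs hs).congr (hae.mono hfK), fun N φ hN hφ hc ↦ ?_⟩
  refine (tendsto_integral_oscKernel_comp_mul_smul hα hs (by linarith) hφ hc).congr' ?_
  filter_upwards [self_mem_nhdsWithin] with ε hε
  refine integral_congr_ae (hae.mono fun x hx ↦ ?_)
  simp only [hfK _ (mul_ne_zero hε hx)]

/-- For `α > 0` and `0 < β < 1`, the function `f x = |x|^{-β} e^{i/|x|^α}` (with
`f 0 = 0`) is locally integrable on `ℝ` and has the Łojasiewicz value `0` at `0`:
`∫ f (ε x) φ x dx → 0` as `ε → 0` through nonzero reals, for every test function `φ`. -/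
theorem lojasiewicz_value_oscillatory_family (α β : ℝ) (hα : 0 < α)
    (hβ0 : 0 < β) (hβ1 : β < 1) (f : ℝ → ℂ)
    (hf0 : f 0 = 0)
    (hf : ∀ x : ℝ, x ≠ 0 →
      f x = (|x| ^ (-β) : ℝ) * Complex.exp (Complex.I / ((|x| ^ α : ℝ) : ℂ))) :
    LocallyIntegrable f volume ∧
    (∀ φ : ℝ → ℂ, ContDiff ℝ (⊤ : ℕ∞) φ → HasCompactSupport φ →
      Tendsto (fun ε : ℝ => ∫ x, f (ε * x) * φ x) (𝓝[≠] (0 : ℝ)) (𝓝 0)) := by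
  obtain ⟨hint, hlim⟩ := lojasiewicz_value_oscillatory_family_general (E := ℂ) α β hα hβ1 f hf
  obtain ⟨N, hN⟩ := exists_nat_gt (β / α)
  exact ⟨hint, fun φ hφ hc ↦
    hlim N φ ((div_lt_iff₀ hα).mp hN) (hφ.of_le (by exact_mod_cast le_top)) hc⟩
end
end
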